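/- Let N ≥ 2, let B ⊂ ℝ^N be a radial domain, let 𝓤 be a set of continuous functions on B, and define M = {e ∈ S : u(x) ≥ u(σ_e(x)) for all x ∈ B(e) and all u ∈ 𝓤}. Suppose S = M ∪ (−M) and that u ≡ u ∘ σ_{e_i} on B for every u ∈ 𝓤 and i = 1, …, N−1, where e₁, …, e_N denotes the standard orthonormal basis of ℝ^N. Then for every q ∈ S with q·e_N = 0 one has u ≡ u ∘ σ_q on B for every u ∈ 𝓤; in particular, every u ∈ 𝓤 is axially symmetric with respect to the axis ℝe_N. -/

import Mathlib

/-!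
Fix a unit vector `q ⟂ e_N`. The composition of the `N - 1` given coordinate reflections is the
reflection `T` in the line `ℝ e_N`, so every `u ∈ 𝓤` is invariant under `T`. Since `T q = -q`, the
map `T` interchanges the two sides of `H(q)` and commutes with `σ_q`. One of `±q` lies in `M`, and
both define the same reflection, so let `q ∈ M`. For `x ∈ B(q)`, the inequality `u ∘ σ_q ≤ u` at
`x` and at `T (σ_q x) ∈ B(q)` gives `u (σ_q x) ≤ u x` and
`u x = u (T x) = u (σ_q (T (σ_q x))) ≤ u (T (σ_q x)) = u (σ_q x)`, hence equality.

For an isometry `Q` fixing `e_N`, the vector `x - Q x` is orthogonal to `e_N`, and if it is nonzero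
then the reflection in its orthogonal complement maps `x` to `Q x`. So `u (Q x) = u x`.
-/

open Set Metric Filter
open scoped RealInnerProductSpace

noncomputable section

variable {N : ℕ}

/-- Reflection through the hyperplane `H(e) = {x : ⟪x,e⟫ = 0}`:
`σ_e(x) = x - 2 (x·e) e`. -/
def reflHyp (e x : EuclideanSpace ℝ (Fin N)) : EuclideanSpace ℝ (Fin N) :=
  x - (2 * ⟪x, e⟫) • e

/-- The half domain `B(e) = {x ∈ B : x·e > 0}`. -/
def halfDom (B : Set (EuclideanSpace ℝ (Fin N))) (e : EuclideanSpace ℝ (Fin N)) :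
    Set (EuclideanSpace ℝ (Fin N)) := {x ∈ B | 0 < ⟪x, e⟫}

/-- A radial domain: an open ball or an open annulus centered at the origin. -/
def IsRadialDomain (B : Set (EuclideanSpace ℝ (Fin N))) : Prop :=
  (∃ R, 0 < R ∧ B = Metric.ball 0 R) ∨
  (∃ r R, 0 < r ∧ r < R ∧ B = {x : EuclideanSpace ℝ (Fin N) | r < ‖x‖ ∧ ‖x‖ < R})

/-- `u` is foliated Schwarz symmetric on `D` with respect to the unit vector `p`:
`u(x) ≥ u(y)` whenever `|x| = |y|` and `x·p ≥ y·p`.  (This is equivalent to axial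
symmetry with respect to `ℝp` together with monotonicity in the polar angle.) -/
def FoliatedSchwarzOn (D : Set (EuclideanSpace ℝ (Fin N)))
    (u : EuclideanSpace ℝ (Fin N) → ℝ) (p : EuclideanSpace ℝ (Fin N)) : Prop :=
  ∀ x ∈ D, ∀ y ∈ D, ‖x‖ = ‖y‖ → ⟪y, p⟫ ≤ ⟪x, p⟫ → u y ≤ u x

/-- The set `M = {e ∈ S : u ≥ u ∘ σ_e on B(e) for all u ∈ 𝓤}`. -/
def reflMonotoneSet (B : Set (EuclideanSpace ℝ (Fin N)))
    (𝓤 : Set (EuclideanSpace ℝ (Fin N) → ℝ)) : Set (EuclideanSpace ℝ (Fin N)) :=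
  {e | ‖e‖ = 1 ∧ ∀ u ∈ 𝓤, ∀ x ∈ halfDom B e, u (reflHyp e x) ≤ u x}

section RadialSet

variable {E : Type*} [NormedAddCommGroup E]

/-- Sets that contain, with a point, every point of the same norm: the invariance under isometries
that makes a ball or an annulus a suitable domain for symmetry questions. No topological condition
is imposed. -/
def IsRadialSet (B : Set E) : Prop :=
  ∀ ⦃x y : E⦄, x ∈ B → ‖y‖ = ‖x‖ → y ∈ B

lemma IsRadialSet.map_mem [Module ℝ E] {B : Set E} (hB : IsRadialSet B) (f : E →ₗᵢ[ℝ] E) {x : E}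
    (hx : x ∈ B) : f x ∈ B :=
  hB hx (f.norm_map x)

lemma IsRadialDomain.isRadialSet {B : Set (EuclideanSpace ℝ (Fin N))} (hB : IsRadialDomain B) :
    IsRadialSet B := by
  rcases hB with ⟨R, -, rfl⟩ | ⟨r, R, -, -, rfl⟩
  all_goals
    intro x y hx hxy
    simpa [hxy] using hx

end RadialSet

lemma span_singleton_neg {R M : Type*} [Ring R] [AddCommGroup M] [Module R M] (x : M) :
    R ∙ (-x) = R ∙ x := by
  rw [← Set.neg_singleton, Submodule.span_neg]

section Reflection

variable {E : Type*} [NormedAddCommGroup E] [InnerProductSpace ℝ E]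

lemma reflection_orthogonal_singleton_apply_of_norm_eq_one {e : E} (he : ‖e‖ = 1) (x : E) :
    (ℝ ∙ e)ᗮ.reflection x = x - (2 * ⟪x, e⟫) • e := by
  rw [Submodule.reflection_orthogonal_apply, Submodule.reflection_singleton_apply, he,
    real_inner_comm]
  simp [two_smul, two_mul, add_smul]

lemma inner_reflection_orthogonal_singleton (q x : E) :
    ⟪(ℝ ∙ q)ᗮ.reflection x, q⟫ = -⟪x, q⟫ := by
  rw [← (ℝ ∙ q)ᗮ.reflection.inner_map_map x q,
    Submodule.reflection_orthogonalComplement_singleton_eq_neg, inner_neg_right, neg_neg]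

lemma reflection_orthogonal_singleton_map_comm {T : E ≃ₗᵢ[ℝ] E} {q : E} (hT : T q = -q) (x : E) :
    (ℝ ∙ q)ᗮ.reflection (T x) = T ((ℝ ∙ q)ᗮ.reflection x) := by
  have hspan : (ℝ ∙ q).map (T.toLinearEquiv : E →ₗ[ℝ] E) = ℝ ∙ q := by
    simp [Submodule.map_span, hT, span_singleton_neg]
  have hcomm := Submodule.reflection_map_apply T (ℝ ∙ q) (T x)
  simp only [hspan, T.symm_apply_apply] at hcomm
  rw [Submodule.reflection_orthogonal_apply, Submodule.reflection_orthogonal_apply, hcomm, map_neg]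

end Reflection

section Invariance

variable {E α : Type*} [NormedAddCommGroup E] [InnerProductSpace ℝ E] {B : Set E} {u : E → α}

lemma apply_sub_two_smul_sum_inner_of_reflection {ι : Type*} {v : ι → E} (hv : Orthonormal ℝ v)
    (hB : IsRadialSet B) (s : Finset ι)
    (hu : ∀ i ∈ s, EqOn (u ∘ (ℝ ∙ v i)ᗮ.reflection) u B) {x : E} (hx : x ∈ B) :
    u (x - (2 : ℝ) • ∑ i ∈ s, ⟪v i, x⟫ • v i) = u x := by
  classical
  induction s using Finset.induction_on generalizing x with
  | empty => simp
  | insert a s ha ih =>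
    set y := (ℝ ∙ v a)ᗮ.reflection x with hy
    have hy_eq : y = x - (2 * ⟪v a, x⟫) • v a := by
      rw [hy, reflection_orthogonal_singleton_apply_of_norm_eq_one (hv.norm_eq_one a),
        real_inner_comm]
    have hinner : ∀ i ∈ s, ⟪v i, y⟫ = ⟪v i, x⟫ := fun i hi => by
      rw [hy_eq, inner_sub_right, inner_smul_right, hv.inner_eq_zero (ne_of_mem_of_not_mem hi ha),
        mul_zero, sub_zero]
    calc u (x - (2 : ℝ) • ∑ i ∈ insert a s, ⟪v i, x⟫ • v i)
        = u (y - (2 : ℝ) • ∑ i ∈ s, ⟪v i, y⟫ • v i) := by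
          congr 1
          rw [Finset.sum_congr rfl fun i hi => congrArg (· • v i) (hinner i hi),
            Finset.sum_insert ha, hy_eq]
          module
      _ = u y := ih (fun i hi => hu i (Finset.mem_insert_of_mem hi))
          (hB.map_mem (ℝ ∙ v a)ᗮ.reflection.toLinearIsometry hx)
      _ = u x := hu a (Finset.mem_insert_self a s) hx

lemma eqOn_comp_reflection_singleton_of_orthonormalBasis {ι : Type*} [Fintype ι]
    (b : OrthonormalBasis ι ℝ E) (j : ι) (hB : IsRadialSet B)
    (hu : ∀ i ≠ j, EqOn (u ∘ (ℝ ∙ b i)ᗮ.reflection) u B) :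
    EqOn (u ∘ (ℝ ∙ b j).reflection) u B := by
  classical
  intro x hx
  have hline : (ℝ ∙ b j).reflection x =
      x - (2 : ℝ) • ∑ i ∈ Finset.univ.erase j, ⟪b i, x⟫ • b i := by
    have hsum : ∑ i ∈ Finset.univ.erase j, ⟪b i, x⟫ • b i = x - ⟪b j, x⟫ • b j := by
      rw [Finset.sum_erase_eq_sub (Finset.mem_univ j), b.sum_repr']
    rw [hsum, Submodule.reflection_singleton_apply, b.norm_eq_one]
    simp only [RCLike.ofReal_real_eq_id, id, one_pow, div_one]
    module
  rw [Function.comp_apply, hline]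
  exact apply_sub_two_smul_sum_inner_of_reflection b.orthonormal hB _
    (fun i hi => hu i (Finset.ne_of_mem_erase hi)) hx

lemma apply_eq_of_sub_mem_of_reflection {V : Submodule ℝ E}
    (hu : ∀ q ∈ V, ‖q‖ = 1 → EqOn (u ∘ (ℝ ∙ q)ᗮ.reflection) u B) {x y : E} (hx : x ∈ B)
    (hnorm : ‖x‖ = ‖y‖) (hV : x - y ∈ V) : u y = u x := by
  rcases eq_or_ne x y with rfl | hne
  · rfl
  have hpos : ‖x - y‖ ≠ 0 := norm_ne_zero_iff.2 (sub_ne_zero.2 hne)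
  have hspan : (ℝ ∙ (‖x - y‖⁻¹ • (x - y))) = ℝ ∙ (x - y) :=
    Submodule.span_singleton_smul_eq (inv_ne_zero hpos).isUnit _
  have hrefl := hu (‖x - y‖⁻¹ • (x - y)) (V.smul_mem _ hV)
    (by rw [norm_smul, norm_inv, norm_norm, inv_mul_cancel₀ hpos]) hx
  simpa only [hspan, Function.comp_apply, Submodule.reflection_sub hnorm] using hrefl

/-- The inequality `u ∘ σ_e ≤ u` on the half `{x ∈ B | 0 < ⟪x, e⟫}` of `B`. The reflection `σ_e` is
`(ℝ ∙ e)ᗮ.reflection`, so that `e` need not be a unit vector. -/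
def ReflMonotoneOn [LE α] (u : E → α) (B : Set E) (e : E) : Prop :=
  ∀ ⦃x : E⦄, x ∈ B → 0 < ⟪x, e⟫ → u ((ℝ ∙ e)ᗮ.reflection x) ≤ u x

variable [PartialOrder α]

lemma ReflMonotoneOn.apply_reflection_eq_of_inner_pos {q x : E} (hq : ReflMonotoneOn u B q)
    (hB : IsRadialSet B) {T : E ≃ₗᵢ[ℝ] E} (hTq : T q = -q) (hT : EqOn (u ∘ T) u B) (hx : x ∈ B)
    (hxq : 0 < ⟪x, q⟫) : u ((ℝ ∙ q)ᗮ.reflection x) = u x := by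
  set σ := (ℝ ∙ q)ᗮ.reflection
  have hσx : σ x ∈ B := hB.map_mem σ.toLinearIsometry hx
  have hTσx : T (σ x) ∈ B := hB.map_mem T.toLinearIsometry hσx
  have hTσx_pos : 0 < ⟪T (σ x), q⟫ := by
    rwa [← neg_neg q, ← hTq, inner_neg_right, T.inner_map_map,
      inner_reflection_orthogonal_singleton, neg_neg]
  refine (hq hx hxq).antisymm ?_
  calc u x = u (T x) := (hT hx).symm
    _ = u (σ (T (σ x))) := by
      rw [reflection_orthogonal_singleton_map_comm hTq, Submodule.reflection_reflection]
    _ ≤ u (T (σ x)) := hq hTσx hTσx_pos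
    _ = u (σ x) := hT hσx

lemma ReflMonotoneOn.eqOn_comp_reflection {q : E} (hq : ReflMonotoneOn u B q)
    (hB : IsRadialSet B) {T : E ≃ₗᵢ[ℝ] E} (hTq : T q = -q) (hT : EqOn (u ∘ T) u B) :
    EqOn (u ∘ (ℝ ∙ q)ᗮ.reflection) u B := by
  intro x hx
  rcases lt_trichotomy ⟪x, q⟫ 0 with hneg | hzero | hpos
  · have hσ := hq.apply_reflection_eq_of_inner_pos hB hTq hT
      (hB.map_mem (ℝ ∙ q)ᗮ.reflection.toLinearIsometry hx)
      (by simpa [inner_reflection_orthogonal_singleton] using hneg)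
    simpa using hσ.symm
  · rw [Function.comp_apply, Submodule.reflection_mem_subspace_eq_self
      (Submodule.mem_orthogonal_singleton_iff_inner_left.2 hzero)]
  · exact hq.apply_reflection_eq_of_inner_pos hB hTq hT hx hpos

theorem axial_symmetry_of_coordinate_symmetries_general {ι : Type*} [Fintype ι]
    (b : OrthonormalBasis ι ℝ E) (j : ι) (hB : IsRadialSet B)
    (hM : ∀ q : E, ‖q‖ = 1 → ⟪q, b j⟫ = 0 → ReflMonotoneOn u B q ∨ ReflMonotoneOn u B (-q))
    (hsym : ∀ i ≠ j, EqOn (u ∘ (ℝ ∙ b i)ᗮ.reflection) u B) :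
    (∀ q : E, ‖q‖ = 1 → ⟪q, b j⟫ = 0 → EqOn (u ∘ (ℝ ∙ q)ᗮ.reflection) u B) ∧
      ∀ Q : E →ₗᵢ[ℝ] E, Q (b j) = b j → EqOn (u ∘ Q) u B := by
  have hT := eqOn_comp_reflection_singleton_of_orthonormalBasis b j hB hsym
  have hrefl : ∀ q : E, ‖q‖ = 1 → ⟪q, b j⟫ = 0 → EqOn (u ∘ (ℝ ∙ q)ᗮ.reflection) u B := by
    intro q hq hqj
    have hTq : (ℝ ∙ b j).reflection q = -q :=
      Submodule.reflection_mem_subspace_orthogonalComplement_eq_neg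
        (Submodule.mem_orthogonal_singleton_iff_inner_left.2 hqj)
    rcases hM q hq hqj with hq_mono | hq_mono
    · exact hq_mono.eqOn_comp_reflection hB hTq hT
    · simpa only [span_singleton_neg] using
        hq_mono.eqOn_comp_reflection hB (by rw [map_neg, hTq]) hT
  refine ⟨hrefl, fun Q hQ x hx => ?_⟩
  refine apply_eq_of_sub_mem_of_reflection (V := (ℝ ∙ b j)ᗮ) (fun q hqj hq => hrefl q hq
    (Submodule.mem_orthogonal_singleton_iff_inner_left.1 hqj)) hx (Q.norm_map x).symm ?_
  have hQx : ⟪Q x, b j⟫ = ⟪x, b j⟫ := by rw [← Q.inner_map_map x, hQ]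
  rw [Submodule.mem_orthogonal_singleton_iff_inner_left, inner_sub_left, hQx, sub_self]

end Invariance

lemma reflHyp_eq_reflection {e : EuclideanSpace ℝ (Fin N)} (he : ‖e‖ = 1) :
    reflHyp e = (ℝ ∙ e)ᗮ.reflection :=
  funext fun x => (reflection_orthogonal_singleton_apply_of_norm_eq_one he x).symm

lemma reflMonotoneOn_of_mem_reflMonotoneSet {B : Set (EuclideanSpace ℝ (Fin N))}
    {𝓤 : Set (EuclideanSpace ℝ (Fin N) → ℝ)} {e : EuclideanSpace ℝ (Fin N)}
    (he : e ∈ reflMonotoneSet B 𝓤) {u : EuclideanSpace ℝ (Fin N) → ℝ} (hu : u ∈ 𝓤) :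
    ReflMonotoneOn u B e := by
  intro x hx hxe
  simpa only [reflHyp_eq_reflection he.1] using he.2 u hu x ⟨hx, hxe⟩

/-- second step in the proof of Proposition `newprop`:
if `S = M ∪ (−M)` and every `u ∈ 𝓤` is symmetric with respect to the
hyperplanes orthogonal to the first `N−1` standard basis vectors, then every
hyperplane containing the `x_N`-axis is a symmetry hyperplane for all `u ∈ 𝓤`;
in particular every `u ∈ 𝓤` is axially symmetric with respect to `ℝ e_N`
(i.e. invariant under every rotation fixing `e_N`). -/
theorem axial_symmetry_of_coordinate_symmetries
    (N : ℕ) (hN : 2 ≤ N)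
    (B : Set (EuclideanSpace ℝ (Fin N))) (hB : IsRadialDomain B)
    (𝓤 : Set (EuclideanSpace ℝ (Fin N) → ℝ))
    (h𝓤 : ∀ u ∈ 𝓤, ContinuousOn u B)
    (hSM : ∀ e : EuclideanSpace ℝ (Fin N), ‖e‖ = 1 →
      e ∈ reflMonotoneSet B 𝓤 ∨ -e ∈ reflMonotoneSet B 𝓤)
    (hsym : ∀ u ∈ 𝓤, ∀ i : Fin N, (i : ℕ) < N - 1 → ∀ x ∈ B,
      u (reflHyp (EuclideanSpace.single i (1:ℝ)) x) = u x) :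
    (∀ q : EuclideanSpace ℝ (Fin N), ‖q‖ = 1 →
        ⟪q, EuclideanSpace.single (⟨N - 1, by omega⟩ : Fin N) (1:ℝ)⟫ = 0 →
        ∀ u ∈ 𝓤, ∀ x ∈ B, u (reflHyp q x) = u x) ∧
    (∀ Q : EuclideanSpace ℝ (Fin N) ≃ₗᵢ[ℝ] EuclideanSpace ℝ (Fin N),
        Q.toLinearEquiv.det = 1 →
        Q (EuclideanSpace.single (⟨N - 1, by omega⟩ : Fin N) (1:ℝ)) =
          EuclideanSpace.single (⟨N - 1, by omega⟩ : Fin N) (1:ℝ) →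
        ∀ u ∈ 𝓤, ∀ x ∈ B, u (Q x) = u x) := by
  have haxial (u) (hu : u ∈ 𝓤) := axial_symmetry_of_coordinate_symmetries_general (u := u)
    (EuclideanSpace.basisFun (Fin N) ℝ) ⟨N - 1, by omega⟩ hB.isRadialSet
    (fun e he _ => (hSM e he).imp (reflMonotoneOn_of_mem_reflMonotoneSet · hu)
      (reflMonotoneOn_of_mem_reflMonotoneSet · hu))
    (fun i hi x hx => by
      have hiN : (i : ℕ) < N - 1 := by have := Fin.val_ne_of_ne hi; grind
      simpa [reflHyp_eq_reflection] using hsym u hu i hiN x hx)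
  simp only [EuclideanSpace.basisFun_apply] at haxial
  exact ⟨fun q hq hqN u hu x hx => reflHyp_eq_reflection hq ▸ (haxial u hu).1 q hq hqN hx,
    fun Q _ hQ u hu x hx => (haxial u hu).2 Q.toLinearIsometry hQ hx⟩

end
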